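/- arXiv:1908.00649 — 3 statements merged into one kernel-verified Lean document; each statement's English description precedes it below -/
import Mathlib

section
/- Let G be a Grothendieck category, X a finitely presented object, and (Y_i)_{i∈I} a direct system in G. Then the canonical morphism colim Ext¹(X, Y_i) ⟶ Ext¹(X, colim Y_i) is a monomorphism of abelian groups. -/
/-!
STATEMENT 2: Let `G` be a Grothendieck category, `X` a finitely presented
object, and `(Y_i)` a direct system in `G`.  Then the canonical morphism
`colim Ext¹(X, Y_i) ⟶ Ext¹(X, colim Y_i)` is a monomorphism of abelian
groups.

Since the colimit of the filtered system of abelian groups `Ext¹(X, Y_i)`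
(with transition maps induced by the system) maps to `Ext¹(X, colim Y_i)` via
the maps induced by the colimit cocone, injectivity of the canonical morphism
is equivalent to the element-wise statement: whenever a class
`e ∈ Ext¹(X, Y_i)` dies in `Ext¹(X, colim Y_i)`, it already dies at some
later stage `j ≥ i` of the system.  This is how the statement is formalized.
-/

open CategoryTheory Limits Opposite Abelian

universe w v u

/-- `Hom(X, -)` preserves filtered colimits. -/
def FinitelyPresented {C : Type u} [Category.{v} C] (X : C) : Prop :=
  ∀ (J : Type v) [SmallCategory J] [IsFiltered J] (D : J ⥤ C) (c : Cocone D),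
    Nonempty (IsColimit c) →
      Nonempty (IsColimit ((coyoneda.obj (op X)).mapCocone c))

/-!
In the derived category a class in `Ext¹(X, Y)` is a right fraction `X ⟵ K ⟶ Y[1]` whose first leg
is a quasi-isomorphism. The cycles `B` of `K` in degree zero cover `X`, and the map `B ⟶ K ⟶ Y[1]`
vanishes for degree reasons, so the class is killed by the epimorphism `B ⟶ X`. It is therefore a
pushforward of the class of `ker (B ⟶ X) ⟶ B ⟶ X`, hence the class of an extension.

The class of an extension `Y ⟶ E ⟶ X` vanishes after pushforward along `a : Y ⟶ Z` exactly when the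
projection of the pushout of `E` along `a` onto `X` splits. This pushout commutes with filtered
colimits in `Z`, so a splitting over the colimit factors through a finite stage when `X` is finitely
presented.
-/

universe t

theorem FinitelyPresented.isFinitelyPresentable {C : Type u} [Category.{v} C] {X : C}
    (hX : FinitelyPresented X) : IsFinitelyPresentable.{v} X :=
  isFinitelyPresentable_iff_preservesFilteredColimits.2
    ⟨fun J _ _ ↦ ⟨fun {D} ↦ ⟨fun {c} hc ↦ hX J D c ⟨hc⟩⟩⟩⟩

section QuasiIsoSingle

open HomologicalComplex

variable {C : Type u} [Category.{v} C] [HasZeroMorphisms C] [HasZeroObject C]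
  {ι : Type*} [DecidableEq ι] {c : ComplexShape ι} {K : HomologicalComplex C c} {i : ι}
  [K.HasHomology i] {X : C} (π : K ⟶ (single C c i).obj X) [QuasiIsoAt π i]

theorem epi_cyclesMap_of_quasiIsoAt_single : Epi (cyclesMap π i) := by
  have h : K.homologyπ i ≫ homologyMap π i ≫ (singleObjHomologySelfIso c i X).hom ≫
      (singleObjCyclesSelfIso c i X).inv = cyclesMap π i := by simp
  exact h ▸ inferInstance

theorem exists_epi_single_map_eq_comp :
    ∃ (B : C) (p : B ⟶ X) (z : (single C c i).obj B ⟶ K),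
      Epi p ∧ z ≫ π = (single C c i).map p := by
  have := epi_cyclesMap_of_quasiIsoAt_single π
  refine ⟨K.cycles i, cyclesMap π i ≫ (singleObjCyclesSelfIso c i X).hom,
    mkHomFromSingle (K.iCycles i) fun j _ ↦ K.iCycles_d i j, inferInstance, ?_⟩
  apply from_single_hom_ext
  simp [single_map_f_self, singleObjCyclesSelfIso_hom]

end QuasiIsoSingle

section Effaceability

open HomologicalComplex DerivedCategory

variable {C : Type u} [Category.{v} C] [Abelian C]

theorem exists_epi_Q_map_single_map_comp_eq_zero [HasDerivedCategory.{w} C] {X : C}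
    {L : CochainComplex C ℤ} {i n : ℤ} (hn : n < i) [L.IsStrictlyLE n]
    (φ : Q.obj ((single C (.up ℤ) i).obj X) ⟶ Q.obj L) :
    ∃ (B : C) (p : B ⟶ X), Epi p ∧ Q.map ((single C (.up ℤ) i).map p) ≫ φ = 0 := by
  obtain ⟨K, π, hπ, g, rfl⟩ := right_fac φ
  rw [isIso_Q_map_iff_quasiIso] at hπ
  obtain ⟨B, p, z, hp, hz⟩ := exists_epi_single_map_eq_comp (i := i) π
  have hzg : z ≫ g = 0 :=
    from_single_hom_ext ((L.isZero_of_isStrictlyLE n i hn).eq_of_tgt _ _)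
  refine ⟨B, p, hp, ?_⟩
  rw [← hz, Q.map_comp, Category.assoc, IsIso.hom_inv_id_assoc, ← Q.map_comp, hzg, Q.map_zero]

theorem exists_epi_mk₀_comp_eq_zero [HasExt.{w} C] {X Y : C} {n : ℕ} (e : Ext X Y (n + 1)) :
    ∃ (B : C) (p : B ⟶ X), Epi p ∧ (Ext.mk₀ p).comp e (zero_add _) = 0 := by
  let := HasDerivedCategory.standard C
  let α := ((singleFunctors C).shiftIso ((n + 1 : ℕ) : ℤ) (-(n + 1)) 0 (by lia)).hom.app Y
  obtain ⟨B, p, hp, h⟩ := exists_epi_Q_map_single_map_comp_eq_zero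
    (L := (CochainComplex.singleFunctor C (-(n + 1))).obj Y) (n := -(n + 1)) (i := 0) (by lia)
    (e.hom ≫ α)
  refine ⟨B, p, hp, Ext.ext ?_⟩
  rw [← cancel_mono α]
  simp only [Ext.comp_hom, Ext.mk₀_hom, ShiftedHom.mk₀_comp, Category.assoc, Ext.zero_hom,
    zero_comp]
  exact h

end Effaceability

section Pushout

variable {C : Type u} [Category.{v} C] [HasZeroMorphisms C] [HasPushouts C] (S : ShortComplex C)

/-- The projection onto `S.X₃` of the pushout of `S.f` along `a`, zero on the left summand. -/
noncomputable def pushoutProj {Y : C} (a : S.X₁ ⟶ Y) : pushout a S.f ⟶ S.X₃ :=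
  pushout.desc 0 S.g (by rw [comp_zero, S.zero])

theorem inl_pushoutProj {Y : C} (a : S.X₁ ⟶ Y) : pushout.inl a S.f ≫ pushoutProj S a = 0 :=
  pushout.inl_desc _ _ _

theorem inr_pushoutProj {Y : C} (a : S.X₁ ⟶ Y) : pushout.inr a S.f ≫ pushoutProj S a = S.g :=
  pushout.inr_desc _ _ _

theorem pushout_map_right_comp_pushoutProj {A B : Under S.X₁} (φ : A ⟶ B) :
    ((Under.pushout S.f).map φ).right ≫ pushoutProj S B.hom = pushoutProj S A.hom := by
  let r : pushout A.hom S.f ⟶ pushout B.hom S.f := ((Under.pushout S.f).map φ).right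
  have inl_r : pushout.inl A.hom S.f ≫ r = φ.right ≫ pushout.inl B.hom S.f :=
    pushout.inl_desc _ _ _
  have inr_r : pushout.inr A.hom S.f ≫ r = pushout.inr B.hom S.f := pushout.inr_desc _ _ _
  suffices r ≫ pushoutProj S B.hom = pushoutProj S A.hom from this
  apply pushout.hom_ext
  · rw [reassoc_of% inl_r, inl_pushoutProj, inl_pushoutProj, comp_zero]
  · rw [reassoc_of% inr_r, inr_pushoutProj, inr_pushoutProj]

theorem exists_isSplitEpi_pushoutProj {J : Type t} [SmallCategory J] [IsFiltered J]
    [IsFinitelyPresentable.{t} S.X₃] {F : J ⥤ Under S.X₁} {c : Cocone F} (hc : IsColimit c)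
    (h : IsSplitEpi (pushoutProj S c.pt.hom)) :
    ∃ j, IsSplitEpi (pushoutProj S (F.obj j).hom) := by
  obtain ⟨⟨s, hs⟩⟩ := h
  let P : Under S.X₁ ⥤ C := Under.pushout S.f ⋙ Under.forget S.X₂
  obtain ⟨j, q, hq⟩ :=
    IsFinitelyPresentable.exists_hom_of_isColimit (isColimitOfPreserves P hc) s
  refine ⟨j, ⟨⟨q, ?_⟩⟩⟩
  calc q ≫ pushoutProj S (F.obj j).hom
      = q ≫ P.map (c.ι.app j) ≫ pushoutProj S c.pt.hom :=
        congr_arg (q ≫ ·) (pushout_map_right_comp_pushoutProj S (c.ι.app j)).symm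
    _ = (q ≫ P.map (c.ι.app j)) ≫ pushoutProj S c.pt.hom := (Category.assoc _ _ _).symm
    _ = s ≫ pushoutProj S c.pt.hom := congr_arg (· ≫ pushoutProj S c.pt.hom) hq
    _ = 𝟙 S.X₃ := hs

/-- The pushforward `Y ⟶ Y ⨿_{S.X₁} S.X₂ ⟶ S.X₃` of `S` along `a`, which represents the
pushforward of the class of `S` when `S` is an extension. -/
noncomputable abbrev pushoutShortComplex {Y : C} (a : S.X₁ ⟶ Y) : ShortComplex C :=
  ShortComplex.mk (pushout.inl a S.f) (pushoutProj S a) (inl_pushoutProj S a)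

/-- The canonical morphism from `S` to its pushforward along `a`, the identity on `S.X₃`. -/
noncomputable def toPushoutShortComplex {Y : C} (a : S.X₁ ⟶ Y) : S ⟶ pushoutShortComplex S a where
  τ₁ := a
  τ₂ := pushout.inr a S.f
  τ₃ := 𝟙 S.X₃
  comm₁₂ := pushout.condition
  comm₂₃ := (inr_pushoutProj S a).trans (Category.comp_id _).symm

end Pushout

section ExtClass

variable {C : Type u} [Category.{v} C] [Abelian C] {S : ShortComplex C}

theorem shortExact_pushoutShortComplex (hS : S.ShortExact) {Y : C} (a : S.X₁ ⟶ Y) :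
    (pushoutShortComplex S a).ShortExact := by
  have := hS.mono_f
  have := hS.epi_g
  have := epi_of_epi_fac (inr_pushoutProj S a)
  refine { exact := ShortComplex.exact_of_g_is_cokernel _ (CokernelCofork.IsColimit.ofπ' _ _ ?_) }
  intro A (k : pushout a S.f ⟶ A) (hk : pushout.inl a S.f ≫ k = 0)
  have hk' : S.f ≫ pushout.inr a S.f ≫ k = 0 := by
    rw [← pushout.condition_assoc, hk, comp_zero]
  refine ⟨hS.exact.desc (pushout.inr a S.f ≫ k) hk', pushout.hom_ext ?_ ?_⟩
  · rw [reassoc_of% inl_pushoutProj S a, hk, zero_comp]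
  · rw [reassoc_of% inr_pushoutProj S a, hS.exact.g_desc]

variable [HasExt.{w} C]

theorem extClass_pushoutShortComplex (hS : S.ShortExact) {Y : C} (a : S.X₁ ⟶ Y) :
    (shortExact_pushoutShortComplex hS a).extClass =
      hS.extClass.comp (Ext.mk₀ a) (add_zero 1) := by
  rw [← Ext.mk₀_id_comp (shortExact_pushoutShortComplex hS a).extClass]
  exact (hS.extClass_naturality (shortExact_pushoutShortComplex hS a)
    (toPushoutShortComplex S a)).symm

theorem extClass_eq_zero_iff_isSplitEpi (hS : S.ShortExact) :
    hS.extClass = 0 ↔ IsSplitEpi S.g := by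
  constructor
  · intro h
    obtain ⟨x, hx⟩ := Ext.covariant_sequence_exact₃ S.X₃ hS (Ext.mk₀ (𝟙 S.X₃)) (zero_add 1)
      (by rw [h, Ext.comp_zero])
    obtain ⟨s, rfl⟩ := (Ext.mk₀_bijective _ _).2 x
    exact ⟨⟨s, (Ext.mk₀_bijective _ _).1 (by simpa using hx)⟩⟩
  · intro h
    rw [← Ext.mk₀_id_comp hS.extClass, ← IsSplitEpi.id S.g, ← Ext.mk₀_comp_mk₀_assoc,
      hS.comp_extClass, Ext.comp_zero]

theorem extClass_comp_mk₀_eq_zero_iff (hS : S.ShortExact) {Y : C} (a : S.X₁ ⟶ Y) :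
    hS.extClass.comp (Ext.mk₀ a) (add_zero 1) = 0 ↔ IsSplitEpi (pushoutProj S a) := by
  rw [← extClass_pushoutShortComplex hS a, extClass_eq_zero_iff_isSplitEpi]

theorem exists_shortExact_extClass_eq {X Y : C} (e : Ext X Y 1) :
    ∃ (E : C) (f : Y ⟶ E) (g : E ⟶ X) (zero : f ≫ g = 0)
      (h : (ShortComplex.mk f g zero).ShortExact), h.extClass = e := by
  obtain ⟨B, p, _, hp⟩ := exists_epi_mk₀_comp_eq_zero e
  have hS : (ShortComplex.mk (kernel.ι p) p (kernel.condition p)).ShortExact :=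
    { exact := ShortComplex.exact_of_f_is_kernel _ (kernelIsKernel p) }
  obtain ⟨x, hx⟩ := Ext.contravariant_sequence_exact₃ hS Y e hp (add_zero 1)
  obtain ⟨a, rfl⟩ := (Ext.mk₀_bijective _ _).2 x
  exact ⟨_, _, _, _, shortExact_pushoutShortComplex hS a,
    (extClass_pushoutShortComplex hS a).trans hx⟩

end ExtClass

theorem colimit_ext_one_mono_general {C : Type u} [Category.{v} C] [Abelian C] [HasExt.{w} C]
    {X : C} [IsFinitelyPresentable.{t} X] {J : Type t} [SmallCategory J] [IsFiltered J]
    {D : J ⥤ C} {c : Cocone D} (hc : IsColimit c) {i : J} (e : Ext X (D.obj i) 1)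
    (he : e.comp (Ext.mk₀ (c.ι.app i)) (add_zero 1) = 0) :
    ∃ (j : J) (φ : i ⟶ j), e.comp (Ext.mk₀ (D.map φ)) (add_zero 1) = 0 := by
  obtain ⟨E, f, g, zero, hS, rfl⟩ := exists_shortExact_extClass_eq e
  obtain ⟨k, hk⟩ := exists_isSplitEpi_pushoutProj (.mk f g zero) (hc.underPost i)
    ((extClass_comp_mk₀_eq_zero_iff hS _).1 he)
  exact ⟨k.right, k.hom, (extClass_comp_mk₀_eq_zero_iff hS _).2 hk⟩

theorem colimit_ext_one_mono
    {C : Type u} [Category.{v} C] [Abelian C] [HasColimits C] [AB5 C]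
    [HasExt.{w} C]
    (hsep : ∃ G : C, IsSeparator G)
    (X : C) (hX : FinitelyPresented X)
    (J : Type v) [SmallCategory J] [IsFiltered J]
    (D : J ⥤ C) (c : Cocone D) (hc : IsColimit c)
    (i : J) (e : Ext X (D.obj i) 1)
    (he : e.comp (Ext.mk₀ (c.ι.app i)) (add_zero 1) = 0) :
    ∃ (j : J) (φ : i ⟶ j), e.comp (Ext.mk₀ (D.map φ)) (add_zero 1) = 0 := by
  have := hX.isFinitelyPresentable
  exact colimit_ext_one_mono_general hc e he
end

section
/- Let G be a Grothendieck category and t = (T, F) a torsion pair. Given a short exact sequence 0 → F → K → T → 0 with F ∈ F and T ∈ T, consider the induced morphism T[0] → F[1] in the heart H_t of the Happel-Reiten-Smalø t-structure on D(G). Then the kernel of this morphism in the abelian category H_t is t(K)[0]. -/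
/-!
STATEMENT 14: Let `G` be a Grothendieck category and `t = (T, F)` a torsion
pair.  Given a short exact sequence `0 → F₁ → K → T₃ → 0` with `F₁ ∈ F` and
`T₃ ∈ T`, consider the induced (connecting) morphism `T₃[0] → F₁[1]` in the
heart `H_t` of the Happel-Reiten-Smalø t-structure on `D(G)`.  Then the
kernel of this morphism in the abelian category `H_t` is `t(K)[0]`.

The heart is the full subcategory of `D(G)` of complexes `X` with
`H⁻¹(X) ∈ F`, `H⁰(X) ∈ T` and all other cohomologies zero; since the
hom-sets of the full subcategory coincide with those of `D(G)`, the kernel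
statement is expressed as a universal property among objects of the heart.
The torsion subobject `t(K)` of `K` is specified by a short exact sequence
`0 → tK → K → K/tK → 0` with `tK ∈ T` and `K/tK ∈ F`.
-/

open CategoryTheory Limits Opposite DerivedCategory

universe w v u

variable {C : Type u} [Category.{v} C]

/-- A torsion pair on an abelian category, as a pair of classes of objects. -/
structure IsTorsionPair [Abelian C] (T F : C → Prop) : Prop where
  torsion_iff : ∀ X : C, T X ↔ ∀ (Y : C), F Y → ∀ f : X ⟶ Y, f = 0
  torsionFree_iff : ∀ Y : C, F Y ↔ ∀ (X : C), T X → ∀ f : X ⟶ Y, f = 0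
  exists_seq : ∀ X : C, ∃ (A B : C) (i : A ⟶ X) (p : X ⟶ B) (w : i ≫ p = 0),
    T A ∧ F B ∧ (ShortComplex.mk i p w).ShortExact

/-- Membership in the heart of the Happel-Reiten-Smalø t-structure
associated with a torsion pair `(T, F)`: `H⁻¹ ∈ F`, `H⁰ ∈ T` and all other
cohomologies vanish. -/
def HeartProp [Abelian C] [HasDerivedCategory.{w} C] (T F : C → Prop)
    (X : DerivedCategory C) : Prop :=
  (∃ T₀ : C, T T₀ ∧ Nonempty ((DerivedCategory.homologyFunctor C 0).obj X ≅ T₀)) ∧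
  (∃ F₀ : C, F F₀ ∧ Nonempty ((DerivedCategory.homologyFunctor C (-1)).obj X ≅ F₀)) ∧
  (∀ n : ℤ, n ≠ -1 → n ≠ 0 → IsZero ((DerivedCategory.homologyFunctor C n).obj X))

/-!
The kernel is computed by two distinguished triangles. If `Z` lies in the aisle of the tilted
t-structure, then `Hom(Z, Y[0]) = 0` for every torsion-free `Y`, because such a morphism is
detected on `H⁰`. Hence the triangle `F[0] → K[0] → T[0] → F[1]` identifies morphisms `Z ⟶ T[0]`
killed by the connecting morphism with morphisms `Z ⟶ K[0]`, and the triangle of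
`t(K) → K → K/t(K)` identifies the latter with morphisms `Z ⟶ t(K)[0]`; uniqueness in this second
step holds because `Hom(Z, (K/t(K))[-1]) = 0` for degree reasons.
-/

section Triangulated

open Pretriangulated

variable {D : Type*} [Category* D] [Preadditive D] [HasZeroObject D] [HasShift D ℤ]
  [∀ n : ℤ, (shiftFunctor D n).Additive] [Pretriangulated D]

lemma existsUnique_comp_mor₂_eq {A : Triangle D} (hA : A ∈ distTriang D) {Z : D}
    (hZ : ∀ a : Z ⟶ A.obj₁, a = 0) (u : Z ⟶ A.obj₃) (hu : u ≫ A.mor₃ = 0) :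
    ∃! v : Z ⟶ A.obj₂, v ≫ A.mor₂ = u := by
  obtain ⟨v, rfl⟩ := Triangle.coyoneda_exact₃ A hA u hu
  refine ⟨v, rfl, fun v' hv' ↦ ?_⟩
  obtain ⟨a, ha⟩ := Triangle.coyoneda_exact₂ A hA (v' - v)
    (by rw [Preadditive.sub_comp, hv', sub_self])
  rw [hZ a, zero_comp] at ha
  exact sub_eq_zero.1 ha

lemma existsUnique_comp_mor₁_eq (t : Triangulated.TStructure D) {A : Triangle D}
    (hA : A ∈ distTriang D) (n : ℤ) [t.IsGE A.obj₃ n] {Z : D} [t.IsLE Z n]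
    (u : Z ⟶ A.obj₂) (hu : u ≫ A.mor₂ = 0) :
    ∃! v : Z ⟶ A.obj₁, v ≫ A.mor₁ = u := by
  have : t.IsGE (A.obj₃⟦(-1 : ℤ)⟧) (n + 1) := t.isGE_shift _ n (-1) (n + 1)
  refine existsUnique_comp_mor₂_eq (inv_rot_of_distTriang A hA)
    (fun a ↦ t.zero (Y := A.obj₃⟦(-1 : ℤ)⟧) a n (n + 1)) u ?_
  exact (Category.assoc _ _ _).symm.trans ((congrArg (· ≫ _) hu).trans zero_comp)

end Triangulated

section Homology

open TStructure

variable [Abelian C] [HasDerivedCategory.{w} C]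

lemma epi_homologyFunctor_map_truncGEπ_app (X : DerivedCategory C) (n : ℤ) :
    Epi ((homologyFunctor C n).map ((t.truncGEπ n).app X)) :=
  (HomologySequence.epi_homologyMap_mor₂_iff _ (t.triangleLTGE_distinguished n X) n (n + 1)).2
    ((isZero_of_isLE _ (n - 1) (n + 1) (by lia)).eq_of_tgt _ _)

lemma mono_homologyFunctor_map_truncLEι_app (X : DerivedCategory C) (n : ℤ) :
    Mono ((homologyFunctor C n).map ((t.truncLEι n).app X)) :=
  (HomologySequence.mono_homologyMap_mor₁_iff _ (t.triangleLEGT_distinguished n X) (n - 1) n).2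
    ((isZero_of_isGE ((t.truncGT n).obj X) (n + 1) (n - 1) (by lia)).eq_of_src _ _)

lemma singleFunctor_hom_eq_zero_of_homologyFunctor_map_eq_zero {n : ℤ} {X Y : C}
    (f : (singleFunctor C n).obj X ⟶ (singleFunctor C n).obj Y)
    (hf : (homologyFunctor C n).map f = 0) : f = 0 := by
  obtain ⟨φ, rfl⟩ := (singleFunctor C n).map_surjective f
  have : (singleFunctor C n ⋙ homologyFunctor C n).Faithful :=
    Functor.Faithful.of_iso (singleFunctorCompHomologyFunctorIso C n).symm
  have hφ : φ = 0 := (singleFunctor C n ⋙ homologyFunctor C n).map_eq_zero_iff.1 hf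
  rw [hφ, Functor.map_zero]

lemma eq_zero_of_homologyFunctor_map_eq_zero {n : ℤ} {X Y : DerivedCategory C}
    [X.IsLE n] [Y.IsGE n] (f : X ⟶ Y) (hf : (homologyFunctor C n).map f = 0) : f = 0 := by
  let g := t.liftTruncLE (t.descTruncGE f n) n
  have hg : (t.truncGEπ n).app X ≫ g ≫ (t.truncLEι n).app Y = f := by
    rw [t.liftTruncLE_ι, t.π_descTruncGE]
  have := epi_homologyFunctor_map_truncGEπ_app X n
  have := mono_homologyFunctor_map_truncLEι_app Y n
  have hHg : (homologyFunctor C n).map g = 0 := by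
    rw [← hg, Functor.map_comp, Functor.map_comp] at hf
    exact zero_of_comp_mono _ (zero_of_epi_comp _ hf)
  obtain ⟨A, ⟨eA⟩⟩ := exists_iso_singleFunctor_obj_of_isGE_of_isLE ((t.truncGE n).obj X) n
  obtain ⟨B, ⟨eB⟩⟩ := exists_iso_singleFunctor_obj_of_isGE_of_isLE ((t.truncLE n).obj Y) n
  have hg₀ : eA.inv ≫ g ≫ eB.hom = 0 :=
    singleFunctor_hom_eq_zero_of_homologyFunctor_map_eq_zero _
      (by simp only [Functor.map_comp, hHg, zero_comp, comp_zero])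
  rw [← hg, zero_of_comp_mono eB.hom (zero_of_epi_comp eA.inv hg₀), zero_comp, comp_zero]

end Homology

section ShortExact

variable [Abelian C] [HasDerivedCategory.{w} C] {S : ShortComplex C}
  {Z : DerivedCategory C}

lemma existsUnique_comp_singleFunctor_map_f (hS : S.ShortExact) [Z.IsLE 0]
    (u : Z ⟶ (singleFunctor C 0).obj S.X₂)
    (hu : u ≫ (singleFunctor C 0).map S.g = 0) :
    ∃! v : Z ⟶ (singleFunctor C 0).obj S.X₁, v ≫ (singleFunctor C 0).map S.f = u :=
  have : hS.singleTriangle.obj₃.IsGE 0 :=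
    inferInstanceAs (((singleFunctor C 0).obj S.X₃).IsGE 0)
  existsUnique_comp_mor₁_eq TStructure.t hS.singleTriangle_distinguished 0 u hu

lemma existsUnique_comp_singleFunctor_map_g (hS : S.ShortExact)
    (hZ : ∀ a : Z ⟶ (singleFunctor C 0).obj S.X₁, a = 0)
    (u : Z ⟶ (singleFunctor C 0).obj S.X₃) (hu : u ≫ hS.singleδ = 0) :
    ∃! v : Z ⟶ (singleFunctor C 0).obj S.X₂, v ≫ (singleFunctor C 0).map S.g = u :=
  existsUnique_comp_mor₂_eq hS.singleTriangle_distinguished hZ u hu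

lemma singleFunctor_map_g_comp_singleδ (hS : S.ShortExact) :
    (singleFunctor C 0).map S.g ≫ hS.singleδ = 0 :=
  Pretriangulated.comp_distTriang_mor_zero₂₃ _ hS.singleTriangle_distinguished

end ShortExact

namespace IsTorsionPair

variable [Abelian C] {T F : C → Prop}

lemma torsion_eq_leftOrthogonal (htp : IsTorsionPair T F) :
    T = ObjectProperty.leftOrthogonal F := by
  ext X
  exact (htp.torsion_iff X).trans ⟨fun h Y f hY ↦ h Y hY f, fun h Y hY f ↦ h f hY⟩

lemma torsionFree_eq_rightOrthogonal (htp : IsTorsionPair T F) :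
    F = ObjectProperty.rightOrthogonal T := by
  ext Y
  exact (htp.torsionFree_iff Y).trans ⟨fun h X f hX ↦ h X hX f, fun h X hX f ↦ h f hX⟩

lemma isClosedUnderIsomorphisms_torsion (htp : IsTorsionPair T F) :
    ObjectProperty.IsClosedUnderIsomorphisms T := by
  rw [htp.torsion_eq_leftOrthogonal]
  infer_instance

lemma isClosedUnderIsomorphisms_torsionFree (htp : IsTorsionPair T F) :
    ObjectProperty.IsClosedUnderIsomorphisms F := by
  rw [htp.torsionFree_eq_rightOrthogonal]
  infer_instance

lemma torsion_of_isZero (htp : IsTorsionPair T F) {X : C} (hX : IsZero X) : T X :=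
  (htp.torsion_iff X).2 fun _ _ f ↦ hX.eq_of_src f 0

lemma torsionFree_of_isZero (htp : IsTorsionPair T F) {X : C} (hX : IsZero X) : F X :=
  (htp.torsionFree_iff X).2 fun _ _ f ↦ hX.eq_of_tgt f 0

variable [HasDerivedCategory.{w} C]

lemma heartProp_iff (htp : IsTorsionPair T F) (X : DerivedCategory C) :
    HeartProp.{w} T F X ↔ X.IsLE 0 ∧ X.IsGE (-1) ∧
      T ((homologyFunctor C 0).obj X) ∧ F ((homologyFunctor C (-1)).obj X) := by
  have := htp.isClosedUnderIsomorphisms_torsion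
  have := htp.isClosedUnderIsomorphisms_torsionFree
  constructor
  · rintro ⟨⟨T₀, hT₀, ⟨eT⟩⟩, ⟨F₀, hF₀, ⟨eF⟩⟩, hX⟩
    exact ⟨(isLE_iff X 0).2 fun n hn ↦ hX n (by lia) (by lia),
      (isGE_iff X (-1)).2 fun n hn ↦ hX n (by lia) (by lia),
      ObjectProperty.prop_of_iso T eT.symm hT₀, ObjectProperty.prop_of_iso F eF.symm hF₀⟩
  · rintro ⟨_, _, hT, hF⟩
    refine ⟨⟨_, hT, ⟨Iso.refl _⟩⟩, ⟨_, hF, ⟨Iso.refl _⟩⟩, fun n hn₁ hn₀ ↦ ?_⟩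
    rcases lt_or_gt_of_ne hn₀ with hn | hn
    · exact isZero_of_isGE X (-1) n (by lia)
    · exact isZero_of_isLE X 0 n hn

lemma heartProp_singleFunctor_obj (htp : IsTorsionPair T F) {X : C} (hX : T X) :
    HeartProp.{w} T F ((singleFunctor C 0).obj X) := by
  have := htp.isClosedUnderIsomorphisms_torsion
  refine (htp.heartProp_iff _).2 ⟨inferInstance, TStructure.t.isGE_of_ge _ (-1) 0, ?_, ?_⟩
  · exact ObjectProperty.prop_of_iso T ((singleFunctorCompHomologyFunctorIso C 0).symm.app X) hX
  · exact htp.torsionFree_of_isZero (isZero_of_isGE _ 0 (-1) (by lia))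

lemma heartProp_singleFunctor_obj_shift (htp : IsTorsionPair T F) {X : C} (hX : F X) :
    HeartProp.{w} T F (((singleFunctor C 0).obj X)⟦(1 : ℤ)⟧) := by
  have := htp.isClosedUnderIsomorphisms_torsionFree
  have : (((singleFunctor C 0).obj X)⟦(1 : ℤ)⟧).IsLE (-1) := TStructure.t.isLE_shift _ 0 1 (-1)
  have : (((singleFunctor C 0).obj X)⟦(1 : ℤ)⟧).IsGE (-1) := TStructure.t.isGE_shift _ 0 1 (-1)
  let e : ((singleFunctor C 0).obj X)⟦(1 : ℤ)⟧ ≅ (singleFunctor C (-1)).obj X :=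
    ((singleFunctors C).shiftIso 1 (-1) 0 (by lia)).app X
  refine (htp.heartProp_iff _).2 ⟨TStructure.t.isLE_of_le _ (-1) 0, inferInstance, ?_, ?_⟩
  · exact htp.torsion_of_isZero (isZero_of_isLE _ (-1) 0 (by lia))
  · exact ObjectProperty.prop_of_iso F ((homologyFunctor C (-1)).mapIso e ≪≫
      (singleFunctorCompHomologyFunctorIso C (-1)).app X).symm hX

lemma hom_singleFunctor_obj_eq_zero (htp : IsTorsionPair T F) {n : ℤ} {Z : DerivedCategory C}
    [Z.IsLE n] (hZ : T ((homologyFunctor C n).obj Z)) {Y : C} (hY : F Y)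
    (f : Z ⟶ (singleFunctor C n).obj Y) : f = 0 := by
  have := htp.isClosedUnderIsomorphisms_torsionFree
  have hHY : F ((homologyFunctor C n).obj ((singleFunctor C n).obj Y)) :=
    ObjectProperty.prop_of_iso F ((singleFunctorCompHomologyFunctorIso C n).symm.app Y) hY
  exact eq_zero_of_homologyFunctor_map_eq_zero f ((htp.torsion_iff _).1 hZ _ hHY _)

lemma existsUnique_comp_singleFunctor_map_comp (htp : IsTorsionPair T F)
    {S : ShortComplex C} (hS : S.ShortExact) (hF : F S.X₁)
    {A B : C} {j : A ⟶ S.X₂} {q : S.X₂ ⟶ B} {w : j ≫ q = 0}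
    (hse : (ShortComplex.mk j q w).ShortExact) (hB : F B)
    {Z : DerivedCategory C} [Z.IsLE 0] (hZ : T ((homologyFunctor C 0).obj Z))
    (u : Z ⟶ (singleFunctor C 0).obj S.X₃) (hu : u ≫ hS.singleδ = 0) :
    ∃! v : Z ⟶ (singleFunctor C 0).obj A, v ≫ (singleFunctor C 0).map (j ≫ S.g) = u := by
  obtain ⟨a, ha, a_unique⟩ := existsUnique_comp_singleFunctor_map_g hS
    (htp.hom_singleFunctor_obj_eq_zero hZ hF) u hu
  obtain ⟨v, hv, v_unique⟩ := existsUnique_comp_singleFunctor_map_f hse a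
    (htp.hom_singleFunctor_obj_eq_zero hZ hB _)
  simp only [Functor.map_comp, ← Category.assoc]
  exact ⟨v, (congrArg (· ≫ _) hv).trans ha, fun v' hv' ↦ v_unique v' (a_unique _ hv')⟩

end IsTorsionPair

theorem kernel_in_heart_of_connecting_map_general
    [Abelian C] [HasDerivedCategory.{w} C]
    (T F : C → Prop) (htp : IsTorsionPair T F)
    (S : ShortComplex C) (hS : S.ShortExact)
    (hF : F S.X₁) (hT : T S.X₃)
    (tK Kbar : C) (j : tK ⟶ S.X₂) (q : S.X₂ ⟶ Kbar) (w : j ≫ q = 0)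
    (hse : (ShortComplex.mk j q w).ShortExact)
    (htK : T tK) (hKbar : F Kbar) :
    HeartProp.{w} T F ((singleFunctor C 0).obj S.X₃) ∧
    HeartProp.{w} T F (((singleFunctor C 0).obj S.X₁)⟦(1 : ℤ)⟧) ∧
    HeartProp.{w} T F ((singleFunctor C 0).obj tK) ∧
    (singleFunctor C 0).map (j ≫ S.g) ≫ hS.singleδ = 0 ∧
    (∀ (Z : DerivedCategory C), HeartProp.{w} T F Z →
      ∀ u : Z ⟶ (singleFunctor C 0).obj S.X₃, u ≫ hS.singleδ = 0 →
        ∃! v : Z ⟶ (singleFunctor C 0).obj tK,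
          v ≫ (singleFunctor C 0).map (j ≫ S.g) = u) := by
  refine ⟨htp.heartProp_singleFunctor_obj hT, htp.heartProp_singleFunctor_obj_shift hF,
    htp.heartProp_singleFunctor_obj htK, ?_, fun Z hZ u hu ↦ ?_⟩
  · rw [Functor.map_comp, Category.assoc, singleFunctor_map_g_comp_singleδ, comp_zero]
  · obtain ⟨_, -, hZ₀, -⟩ := (htp.heartProp_iff Z).1 hZ
    exact htp.existsUnique_comp_singleFunctor_map_comp hS hF hse hKbar hZ₀ u hu

theorem kernel_in_heart_of_connecting_map
    [Abelian C] [HasColimits C] [AB5 C] [HasDerivedCategory.{w} C]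
    (hsep : ∃ G : C, IsSeparator G)
    (T F : C → Prop) (htp : IsTorsionPair T F)
    (S : ShortComplex C) (hS : S.ShortExact)
    (hF : F S.X₁) (hT : T S.X₃)
    -- the torsion subobject `tK` of `K := S.X₂`
    (tK Kbar : C) (j : tK ⟶ S.X₂) (q : S.X₂ ⟶ Kbar) (w : j ≫ q = 0)
    (hse : (ShortComplex.mk j q w).ShortExact)
    (h1 : T tK) (h2 : F Kbar) :
    HeartProp.{w} T F ((singleFunctor C 0).obj S.X₃) ∧
    HeartProp.{w} T F (((singleFunctor C 0).obj S.X₁)⟦(1 : ℤ)⟧) ∧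
    HeartProp.{w} T F ((singleFunctor C 0).obj tK) ∧
    (singleFunctor C 0).map (j ≫ S.g) ≫ hS.singleδ = 0 ∧
    (∀ (Z : DerivedCategory C), HeartProp.{w} T F Z →
      ∀ u : Z ⟶ (singleFunctor C 0).obj S.X₃, u ≫ hS.singleδ = 0 →
        ∃! v : Z ⟶ (singleFunctor C 0).obj tK,
          v ≫ (singleFunctor C 0).map (j ≫ S.g) = u) :=
  kernel_in_heart_of_connecting_map_general T F htp S hS hF hT tK Kbar j q w hse h1 h2
end

section
/- Let G be a Grothendieck category and Q a quasi-cotilting object, i.e. Cogen(Q) = ⊥₁Q ∩ Cogen-bar(Q). Then the class F := Cogen(Q) is closed under direct limits; equivalently, the torsion pair (⊥F, F) is of finite type. -/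
/-!
STATEMENT 16: Let `G` be a Grothendieck category and `Q` a quasi-cotilting
object, i.e. `Cogen(Q) = ⊥₁Q ∩ Cogen-bar(Q)`.  Then the class
`F := Cogen(Q)` is closed under direct limits; equivalently, the associated
torsion pair is of finite type.

`Ext¹(X,Q) = 0` is encoded as the splitting of all short exact sequences
`0 → Q → E → X → 0`.
-/

open CategoryTheory Limits Opposite

universe v u

variable {C : Type u} [Category.{v} C]

section
variable [Abelian C] [HasLimits C] [HasColimits C]

/-- `Cogen Q`: subobjects of products of copies of `Q`. -/
def CogenClass (Q X : C) : Prop :=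
  ∃ (ι : Type v) (f : X ⟶ ∏ᶜ (fun _ : ι => Q)), Mono f

/-- `Cogen-bar Q`: quotients of objects of `Cogen Q`. -/
def CogenBarClass (Q X : C) : Prop :=
  ∃ (N : C), CogenClass Q N ∧ ∃ p : N ⟶ X, Epi p

/-- `Ext¹(X, Q) = 0`, encoded as: every short exact sequence
`0 → Q → E → X → 0` splits. -/
def Ext1VanishesInto (X Q : C) : Prop :=
  ∀ (E : C) (i : Q ⟶ E) (p : E ⟶ X) (w : i ≫ p = 0),
    (ShortComplex.mk i p w).ShortExact → ∃ r : E ⟶ Q, i ≫ r = 𝟙 Q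

end

/-- A class of objects is closed under direct (filtered) limits. -/
def ClosedUnderDirectLimits (P : C → Prop) : Prop :=
  ∀ (J : Type v) [SmallCategory J] [IsFiltered J] (D : J ⥤ C),
    (∀ j : J, P (D.obj j)) →
    ∀ (c : Cocone D), IsColimit c → P c.pt

/-!
A class closed under isomorphisms and under colimits of well-ordered chains is closed under filtered
colimits: a directed set is the monotone image of the finite subsets of a well-ordered set, and the
finite subsets of an initial segment are obtained by transfinite induction, adding one element at
successor steps and taking a colimit over a well-ordered set at limit steps.

By AB5, the colimit of a chain `X` without a last term embeds in the reduced product of the `X w`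
modulo the tails, so that it is enough to have the reduced product `R` in the class. It is the
quotient of the product `A = ∏ X w` by the subobject `K` of the sequences vanishing on a tail, and
therefore belongs to the class as soon as every morphism `f : K ⟶ Q` extends to `A`.

To extend `f`, copy `A` diagonally along each branch of a tall tree into the product, over all the
nodes, of the `X w`. Distinct branches eventually separate, so the relations between the copies of
`A` die in `R` and lie in the coproduct of the copies of `K`. The image of the copies has no
extensions by `Q`. So for each set `T` of branches, the family equal to `f` on the copies of `K`
along `T` and to `0` along the other branches becomes compatible with these relations after
subtracting restrictions of morphisms `A ⟶ Q`: its value on the sequences vanishing from the level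
`w` on then depends on the node at the level `w` only. The tree is chosen so that there are fewer
such data on the nodes than sets of branches. Hence two distinct sets share their data, and on a
branch that belongs to exactly one of them, `f` is a difference of two restrictions.
-/

section ColimitShapes

variable (P : ObjectProperty C)

lemma isClosedUnderColimitsOfShape_of_final {J K : Type*} [Category J] [Category K]
    (G : J ⥤ K) [G.Final] [P.IsClosedUnderColimitsOfShape J] :
    P.IsClosedUnderColimitsOfShape K :=
  ⟨(P.colimitsOfShape_le_of_final G).trans (P.colimitsOfShape_le J)⟩

lemma isClosedUnderColimitsOfShape_of_cofinal {I J : Type*} [Preorder I] [IsDirectedOrder I]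
    [Preorder J] [P.IsClosedUnderColimitsOfShape I] {f : I → J} (hf : Monotone f)
    (hf' : ∀ j, ∃ i, j ≤ f i) : P.IsClosedUnderColimitsOfShape J :=
  have := hf.final_functor_iff.2 hf'
  isClosedUnderColimitsOfShape_of_final P hf.functor

variable [HasColimits C] [P.IsClosedUnderIsomorphisms]

lemma prop_colimit_final_comp {J K : Type v} [SmallCategory J] [SmallCategory K]
    (G : J ⥤ K) [G.Final] [P.IsClosedUnderColimitsOfShape K] (D : K ⥤ C)
    (hD : ∀ k, P (D.obj k)) : P (colimit (G ⋙ D)) :=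
  P.prop_of_iso (Functor.Final.colimitIso G D).symm (P.prop_colimit D hD)

lemma isClosedUnderColimitsOfShape_of_final_prod {J K L : Type v} [SmallCategory J]
    [SmallCategory K] [SmallCategory L] (Φ : J × K ⥤ L) [Φ.Final]
    [P.IsClosedUnderColimitsOfShape J]
    (h : ∀ (j : J) (D : L ⥤ C), (∀ l, P (D.obj l)) →
      P (colimit ((Functor.curry.obj Φ).obj j ⋙ D))) :
    P.IsClosedUnderColimitsOfShape L := by
  refine .mk' ?_
  rintro _ ⟨D, hD⟩
  exact P.prop_of_iso
    ((colimitIsoColimitCurryCompColim (Φ ⋙ D)).symm ≪≫ Functor.Final.colimitIso Φ D)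
    (P.prop_colimit _ fun j ↦ h j D hD)

end ColimitShapes

/-- Finite subsets of `S`, ordered by inclusion. -/
abbrev FinsetIn {A : Type v} (S : Set A) : Type v := {t : Finset A // (t : Set A) ⊆ S}

namespace FinsetIn

variable {A : Type v}

instance (S : Set A) : Nonempty (FinsetIn S) := ⟨⟨∅, by simp⟩⟩

instance (S : Set A) : IsDirectedOrder (FinsetIn S) where
  directed s t := by
    classical
    exact ⟨⟨s.1 ∪ t.1, by simpa using ⟨s.2, t.2⟩⟩, Finset.subset_union_left,
      Finset.subset_union_right⟩

open Classical in
/-- Intersection with `T`, as a map from the finite subsets of `S` to those of a set `U`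
containing `S ∩ T`. -/
noncomputable def inter {S U : Set A} (T : Set A) (h : S ∩ T ⊆ U) (t : FinsetIn S) : FinsetIn U :=
  ⟨{a ∈ t.1 | a ∈ T}, fun a ha ↦ by
    have ha' : a ∈ t.1 ∧ a ∈ T := by simpa using ha
    exact h ⟨t.2 (by simpa using ha'.1), ha'.2⟩⟩

lemma mem_inter {S U T : Set A} {h : S ∩ T ⊆ U} {t : FinsetIn S} {a : A} :
    a ∈ (inter T h t).1 ↔ a ∈ t.1 ∧ a ∈ T := by simp [inter]

lemma inter_mono {S U T T' : Set A} {h : S ∩ T ⊆ U} {h' : S ∩ T' ⊆ U} {t t' : FinsetIn S}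
    (hT : T ⊆ T') (ht : t ≤ t') : inter T h t ≤ inter T' h' t' := fun a ha ↦ by
  rw [mem_inter] at ha ⊢
  exact ⟨ht ha.1, hT ha.2⟩

lemma subset_inter {S U T : Set A} (h : S ∩ T ⊆ U) {t : FinsetIn S} (ht : (t.1 : Set A) ⊆ T) :
    t.1 ⊆ (inter T h t).1 := fun _ ha ↦ mem_inter.2 ⟨ha, ht ha⟩

variable (P : ObjectProperty C)

lemma isClosedUnderColimitsOfShape_insert (a : A) (S : Set A)
    [P.IsClosedUnderColimitsOfShape (FinsetIn S)] :
    P.IsClosedUnderColimitsOfShape (FinsetIn (insert a S)) := by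
  classical
  let f (t : FinsetIn S) : FinsetIn (insert a S) :=
    ⟨insert a t.1, by simpa using Set.insert_subset_insert t.2⟩
  have hf : Monotone f := fun s t h ↦ Finset.insert_subset_insert a h
  refine isClosedUnderColimitsOfShape_of_cofinal P hf fun t ↦
    ⟨⟨t.1.erase a, by simpa using t.2⟩, fun x hx ↦ ?_⟩
  by_cases hxa : x = a <;> simp [f, hxa, hx]

variable [HasColimits C] [P.IsClosedUnderIsomorphisms]

lemma isClosedUnderColimitsOfShape_iUnion {W : Type v} [Preorder W] [IsDirectedOrder W]
    [Nonempty W] [P.IsClosedUnderColimitsOfShape W] {S : W → Set A} (hS : Monotone S)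
    (h : ∀ w, P.IsClosedUnderColimitsOfShape (FinsetIn (S w))) :
    P.IsClosedUnderColimitsOfShape (FinsetIn (⋃ w, S w)) := by
  -- Both `(w, t) ↦ t ∩ S w` and, for fixed `w`, its corestriction to the finite subsets of `S w`
  -- are final, so that a colimit over the union is an iterated one.
  let Φ : W × FinsetIn (⋃ w, S w) ⥤ FinsetIn (⋃ w, S w) :=
    { obj x := inter (S x.1) Set.inter_subset_left x.2
      map φ := homOfLE (inter_mono (hS (leOfHom φ.1)) (leOfHom φ.2)) }
  have : Φ.Final := Functor.final_of_exists_of_isFiltered _ (fun t ↦ by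
    obtain ⟨w, hw⟩ := hS.directed_le.exists_mem_subset_of_finset_subset_biUnion t.2
    exact ⟨(w, t), ⟨homOfLE (subset_inter Set.inter_subset_left hw)⟩⟩)
    (fun {_ c} _ _ ↦ ⟨c, 𝟙 _, Subsingleton.elim _ _⟩)
  refine isClosedUnderColimitsOfShape_of_final_prod P Φ fun w D hD ↦ ?_
  have hf : Monotone (inter (S w) Set.inter_subset_right : FinsetIn (⋃ w, S w) → FinsetIn (S w)) :=
    fun _ _ ↦ inter_mono le_rfl
  have hg : Monotone fun t : FinsetIn (S w) ↦
    (⟨t.1, t.2.trans (Set.subset_iUnion S w)⟩ : FinsetIn (⋃ w, S w)) := fun _ _ h ↦ h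
  have : hf.functor.Final := hf.final_functor_iff.2 fun t ↦
    ⟨⟨t.1, t.2.trans (Set.subset_iUnion S w)⟩, subset_inter Set.inter_subset_right t.2⟩
  have := h w
  exact prop_colimit_final_comp P hf.functor (hg.functor ⋙ D) fun _ ↦ hD _

lemma isClosedUnderColimitsOfShape_of_eq_iUnion_Iic
    (hP : ∀ (W : Type v) [LinearOrder W] [WellFoundedLT W] [Nonempty W],
      P.IsClosedUnderColimitsOfShape W) [LinearOrder A] [WellFoundedLT A] {S W : Set A}
    (hS : S = ⋃ w : W, Set.Iic w.1)
    (h : ∀ w ∈ W, P.IsClosedUnderColimitsOfShape (FinsetIn (Set.Iic w))) :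
    P.IsClosedUnderColimitsOfShape (FinsetIn S) := by
  subst hS
  obtain rfl | ⟨w, hw⟩ := W.eq_empty_or_nonempty
  · have := hP PUnit.{v + 1}
    rw [Set.iUnion_of_empty]
    exact isClosedUnderColimitsOfShape_of_cofinal P
      (f := fun _ : PUnit.{v + 1} ↦ (⟨∅, by simp⟩ : FinsetIn (∅ : Set A))) (fun _ _ _ ↦ le_rfl)
      fun t ↦ ⟨⟨⟩, fun _ ha ↦ (t.2 ha).elim⟩
  · have : Nonempty W := ⟨⟨w, hw⟩⟩
    have := hP W
    exact isClosedUnderColimitsOfShape_iUnion P (fun _ _ h ↦ Set.Iic_subset_Iic.2 h)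
      fun w ↦ h w.1 w.2

lemma isClosedUnderColimitsOfShape_Iic
    (hP : ∀ (W : Type v) [LinearOrder W] [WellFoundedLT W] [Nonempty W],
      P.IsClosedUnderColimitsOfShape W) [LinearOrder A] [WellFoundedLT A] (a : A) :
    P.IsClosedUnderColimitsOfShape (FinsetIn (Set.Iic a)) := by
  induction a using WellFoundedLT.induction with
  | ind a ih =>
    have hIio : Set.Iio a = ⋃ w : Set.Iio a, Set.Iic w.1 := by
      ext b
      simpa using ⟨fun hb ↦ ⟨b, hb, le_rfl⟩, fun ⟨c, hc, hb⟩ ↦ hb.trans_lt hc⟩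
    have := isClosedUnderColimitsOfShape_of_eq_iUnion_Iic P hP hIio ih
    rw [← Set.Iio_insert]
    exact isClosedUnderColimitsOfShape_insert P _ _

lemma isClosedUnderColimitsOfShape_univ
    (hP : ∀ (W : Type v) [LinearOrder W] [WellFoundedLT W] [Nonempty W],
      P.IsClosedUnderColimitsOfShape W) (A : Type v) :
    P.IsClosedUnderColimitsOfShape (FinsetIn (Set.univ : Set A)) := by
  obtain ⟨_, _⟩ := exists_wellFoundedLT A
  exact isClosedUnderColimitsOfShape_of_eq_iUnion_Iic P hP (W := Set.univ) (by ext b; simp)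
    fun a _ ↦ isClosedUnderColimitsOfShape_Iic P hP a

end FinsetIn

lemma exists_forall_mem_le_forall_ssubset_le {I : Type*} [Preorder I] [IsDirectedOrder I]
    [Nonempty I] (t : Finset I) (g : (s : Finset I) → s ⊂ t → I) :
    ∃ i, (∀ a ∈ t, a ≤ i) ∧ ∀ s hs, g s hs ≤ i := by
  classical
  obtain ⟨i, hi⟩ := t.exists_le
  have : Finite {s // s ⊂ t} := t.ssubsets.finite_toSet.subset fun _ ↦ Finset.mem_ssubsets.2
  obtain ⟨j, hj⟩ := Finite.exists_le fun s : {s // s ⊂ t} ↦ g s.1 s.2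
  obtain ⟨k, hik, hjk⟩ := exists_ge_ge i j
  exact ⟨k, fun a ha ↦ (hi a ha).trans hik, fun s hs ↦ (hj ⟨s, hs⟩).trans hjk⟩

lemma exists_monotone_finset_forall_mem_le (I : Type*) [Preorder I] [IsDirectedOrder I]
    [Nonempty I] : ∃ f : Finset I → I, Monotone f ∧ ∀ t, ∀ i ∈ t, i ≤ f t := by
  classical
  choose F hF hF' using exists_forall_mem_le_forall_ssubset_le (I := I)
  let f : Finset I → I := Finset.strongInduction F
  have hf (t : Finset I) : f t = F t fun s _ ↦ f s := Finset.strongInduction_eq _ _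
  refine ⟨f, fun s t hst ↦ ?_, fun t i hi ↦ hf t ▸ hF t _ i hi⟩
  obtain rfl | h := eq_or_ssubset_of_subset hst
  · rfl
  · exact hf t ▸ hF' t (fun s _ ↦ f s) s h

theorem isClosedUnderColimitsOfShape_of_wellOrder [HasColimits C] (P : ObjectProperty C)
    [P.IsClosedUnderIsomorphisms]
    (hP : ∀ (W : Type v) [LinearOrder W] [WellFoundedLT W] [Nonempty W],
      P.IsClosedUnderColimitsOfShape W) (J : Type v) [SmallCategory J] [IsFiltered J] :
    P.IsClosedUnderColimitsOfShape J := by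
  obtain ⟨I, _, _, _, G, _⟩ := IsFiltered.exists_directed J
  obtain ⟨f, hf, hf'⟩ := exists_monotone_finset_forall_mem_le I
  have := FinsetIn.isClosedUnderColimitsOfShape_univ P hP I
  have : P.IsClosedUnderColimitsOfShape I :=
    isClosedUnderColimitsOfShape_of_cofinal P (f := fun t : FinsetIn (Set.univ : Set I) ↦ f t.1)
      (fun _ _ h ↦ hf h) fun i ↦ ⟨⟨{i}, Set.subset_univ _⟩, hf' _ i (by simp)⟩
  exact isClosedUnderColimitsOfShape_of_final P G

section Tree

open Cardinal

lemma exists_le_and_two_power_sum_le (W : Type v) [Preorder W] [WellFoundedLT W]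
    (K : Cardinal.{v}) :
    ∃ c : W → Cardinal.{v}, ∀ w, K ≤ c w ∧ 2 ^ Cardinal.sum (fun v : Set.Iio w ↦ c v) ≤ c w := by
  let F (w : W) (g : ∀ v, v < w → Cardinal.{v}) : Cardinal.{v} :=
    max K (2 ^ Cardinal.sum fun v : Set.Iio w ↦ g v.1 v.2)
  have hF (w : W) : WellFoundedLT.fix F w = F w fun v _ ↦ WellFoundedLT.fix F v :=
    WellFoundedLT.fix_eq F w
  exact ⟨WellFoundedLT.fix F, fun w ↦
    ⟨(le_max_left _ _).trans (hF w).ge, (le_max_right _ _).trans (hF w).ge⟩⟩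

/-- The subsets of `L` are to be thought of as the branches of a tree, two of which pass through the
same node of level `w` when they contain the same elements of rank less than `w`. -/
lemma exists_rank_forall_not_injective (W : Type v) [Preorder W] [WellFoundedLT W] [Nonempty W]
    (K : Cardinal.{v}) :
    ∃ (L : Type v) (r : L → W), ∀ H : W → Type v, (∀ w, #(H w) ≤ K) →
      ∀ φ : Set (Set L) → ∀ w, Set {x // r x < w} → H w, ¬ Function.Injective φ := by
  obtain ⟨c, hc⟩ := exists_le_and_two_power_sum_le W (max ℵ₀ K)
  let L := Σ w, (c w).out
  have hL : #L = Cardinal.sum c := by simp [L]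
  have hKL : max ℵ₀ K ≤ #L :=
    (hc (Classical.arbitrary W)).1.trans ((le_sum c _).trans hL.ge)
  have hL₀ : ℵ₀ ≤ #L := (le_max_left _ _).trans hKL
  refine ⟨L, Sigma.fst, fun H hH φ hφ ↦ (cantor (2 ^ #L)).not_ge ?_⟩
  have h_nodes (w : W) : #(Set {x : L // x.1 < w}) ≤ c w := by
    rw [mk_set, mk_congr (Equiv.subtypeSigmaEquiv (fun w ↦ (c w).out) (· < w)), mk_sigma]
    simp only [mk_out]
    exact (hc w).2
  calc (2 : Cardinal.{v}) ^ (2 : Cardinal.{v}) ^ #L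
      = #(Set (Set L)) := by rw [mk_set, mk_set]
    _ ≤ #(∀ w, Set {x : L // x.1 < w} → H w) := mk_le_of_injective hφ
    _ = Cardinal.prod fun w ↦ #(H w) ^ #(Set {x : L // x.1 < w}) := by simp [mk_pi]
    _ ≤ Cardinal.prod fun w ↦ #L ^ c w := prod_le_prod _ _ fun w ↦
        (power_le_power_right ((hH w).trans ((le_max_right _ _).trans hKL))).trans
          (power_le_power_left (aleph0_pos.trans_le hL₀).ne' (h_nodes w))
    _ = #L ^ #L := by rw [hL, ← power_sum]
    _ = 2 ^ #L := power_self_eq hL₀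

end Tree

section Ext

variable [Abelian C]

lemma shortExact_kernel_ι {X Y : C} (f : X ⟶ Y) [Epi f] :
    (ShortComplex.mk (kernel.ι f) f (kernel.condition f)).ShortExact where
  exact := ShortComplex.exact_kernel f
  mono_f := inferInstanceAs (Mono (kernel.ι f))
  epi_g := ‹Epi f›

lemma shortExact_factorThruImage {X Y : C} (f : X ⟶ Y) :
    (ShortComplex.mk (kernel.ι f) (factorThruImage f)
      (comp_factorThruImage_eq_zero (kernel.condition f))).ShortExact where
  exact := ShortComplex.exact_of_g_is_cokernel _
    (ShortComplex.Exact.isColimitImage (ShortComplex.exact_kernel f))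
  mono_f := inferInstanceAs (Mono (kernel.ι f))
  epi_g := inferInstanceAs (Epi (factorThruImage f))

lemma shortExact_pushout {S : ShortComplex C} (hS : S.ShortExact) {Q : C} (f : S.X₁ ⟶ Q) :
    (ShortComplex.mk (pushout.inr S.f f) (pushout.desc S.g (0 : Q ⟶ S.X₃) (by simp))
      (pushout.inr_desc _ _ _)).ShortExact := by
  have := hS.mono_f
  have := hS.epi_g
  have hg : pushout.inl S.f f ≫ pushout.desc S.g (0 : Q ⟶ S.X₃) (by simp) = S.g :=
    pushout.inl_desc _ _ _
  have := epi_of_epi_fac hg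
  refine { exact := ?_, mono_f := inferInstanceAs (Mono (pushout.inr S.f f)), epi_g := this }
  refine ShortComplex.exact_of_g_is_cokernel _ (CokernelCofork.IsColimit.ofπ' _ _ fun k hk ↦ ?_)
  have hk' : S.f ≫ pushout.inl S.f f ≫ k = 0 := by
    rw [pushout.condition_assoc, hk, comp_zero]
  refine ⟨hS.exact.desc _ hk', pushout.hom_ext ?_ ?_⟩
  · rw [reassoc_of% hg, hS.exact.g_desc]
  · rw [pushout.inr_desc_assoc, zero_comp, hk]

lemma shortExact_pullback {S : ShortComplex C} (hS : S.ShortExact) {Z : C} (g : Z ⟶ S.X₃) :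
    (ShortComplex.mk (pullback.lift S.f (0 : S.X₁ ⟶ Z) (by simp)) (pullback.snd S.g g)
      (pullback.lift_snd _ _ _)).ShortExact := by
  have := hS.mono_f
  have := hS.epi_g
  have hf : pullback.lift S.f (0 : S.X₁ ⟶ Z) (by simp) ≫ pullback.fst S.g g = S.f :=
    pullback.lift_fst _ _ _
  have := mono_of_mono_fac hf
  refine { exact := ?_, mono_f := this, epi_g := inferInstanceAs (Epi (pullback.snd S.g g)) }
  refine ShortComplex.exact_of_f_is_kernel _ (KernelFork.IsLimit.ofι' _ _ fun k hk ↦ ?_)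
  have hk' : (k ≫ pullback.fst S.g g) ≫ S.g = 0 := by
    rw [Category.assoc, pullback.condition, reassoc_of% hk, zero_comp]
  refine ⟨hS.exact.lift _ hk', pullback.hom_ext ?_ ?_⟩
  · rw [Category.assoc, hf, hS.exact.lift_f]
  · rw [Category.assoc, pullback.lift_snd, comp_zero, hk]

variable {S : ShortComplex C} {Q : C}

lemma Ext1VanishesInto.exists_extension (h : Ext1VanishesInto S.X₃ Q) (hS : S.ShortExact)
    (f : S.X₁ ⟶ Q) : ∃ g : S.X₂ ⟶ Q, S.f ≫ g = f := by
  obtain ⟨r, hr⟩ := h _ _ _ _ (shortExact_pushout hS f)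
  exact ⟨pushout.inl S.f f ≫ r, by rw [pushout.condition_assoc, hr, Category.comp_id]⟩

lemma Ext1VanishesInto.exists_lift {Z : C} (h : Ext1VanishesInto Z S.X₁) (hS : S.ShortExact)
    (g : Z ⟶ S.X₃) : ∃ s : Z ⟶ S.X₂, s ≫ S.g = g := by
  have hS' := shortExact_pullback hS g
  obtain ⟨r, hr⟩ := h _ _ _ _ hS'
  have hs := (ShortComplex.Splitting.ofExactOfRetraction _ hS'.exact r hr hS'.epi_g).s_g
  exact ⟨_ ≫ pullback.fst S.g g, by
    rw [Category.assoc, pullback.condition]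
    exact (reassoc_of% hs) g⟩

lemma Ext1VanishesInto.of_exists_extension (h : Ext1VanishesInto S.X₂ Q) (hS : S.ShortExact)
    (hf : ∀ f : S.X₁ ⟶ Q, ∃ g : S.X₂ ⟶ Q, S.f ≫ g = f) : Ext1VanishesInto S.X₃ Q := by
  intro E i p w hE
  have := hS.epi_g
  have := hE.mono_f
  obtain ⟨s, hs : s ≫ p = S.g⟩ := h.exists_lift hE S.g
  have hsp : (S.f ≫ s) ≫ p = 0 := by rw [Category.assoc, hs, S.zero]
  obtain ⟨g, hg⟩ := hf (hE.exact.lift (S.f ≫ s) hsp)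
  have hsg : S.f ≫ (s - g ≫ i) = 0 := by
    rw [Preadditive.comp_sub, reassoc_of% hg, sub_eq_zero]
    exact (hE.exact.lift_f _ hsp).symm
  have hσ : hS.exact.desc (s - g ≫ i) hsg ≫ p = 𝟙 S.X₃ := by
    rw [← cancel_epi S.g, hS.exact.g_desc_assoc, Preadditive.sub_comp, hs, Category.assoc, w,
      comp_zero, sub_zero, Category.comp_id]
  let σ := ShortComplex.Splitting.ofExactOfSection _ hE.exact _ hσ hE.mono_f
  exact ⟨σ.r, σ.f_r⟩

end Ext

section ReducedProduct

variable [HasLimits C] {W : Type v} [Preorder W] (Y : W → C)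

/-- The inverse system of the products over the tails of `W`: it sends `w` to the product of the
`Y v` with `w ≤ v`. -/
noncomputable def tailProduct : W ⥤ C where
  obj w := ∏ᶜ fun v : Set.Ici w ↦ Y v
  map {w _} φ := Pi.lift fun v ↦ Pi.π (fun v : Set.Ici w ↦ Y v) ⟨v, (leOfHom φ).trans v.2⟩
  map_id _ := Pi.hom_ext _ _ fun v ↦ by rw [Pi.lift_π, Category.id_comp]
  map_comp _ _ := Pi.hom_ext _ _ fun v ↦ by rw [Pi.lift_π, Category.assoc, Pi.lift_π, Pi.lift_π]

namespace tailProduct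

/-- The projection from the product over a tail to a factor. -/
noncomputable def π {w v : W} (h : w ≤ v) : (tailProduct Y).obj w ⟶ Y v :=
  Pi.π (fun v : Set.Ici w ↦ Y v) ⟨v, h⟩

variable {Y} in
lemma hom_ext {Z : C} {w : W} {f g : Z ⟶ (tailProduct Y).obj w}
    (h : ∀ v (hv : w ≤ v), f ≫ π Y hv = g ≫ π Y hv) : f = g :=
  Pi.hom_ext _ _ fun v ↦ h v v.2

/-- The morphism to the product over a tail given by its components. -/
noncomputable def lift {Z : C} {w : W} (f : ∀ v, w ≤ v → (Z ⟶ Y v)) :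
    Z ⟶ (tailProduct Y).obj w :=
  Pi.lift fun v ↦ f v v.2

@[simp]
lemma lift_π {Z : C} {w : W} (f : ∀ v, w ≤ v → (Z ⟶ Y v)) {v : W} (h : w ≤ v) :
    lift Y f ≫ π Y h = f v h :=
  Pi.lift_π _ _

@[simp]
lemma map_π {w w' v : W} (φ : w ⟶ w') (h : w' ≤ v) :
    (tailProduct Y).map φ ≫ π Y h = π Y ((leOfHom φ).trans h) :=
  Pi.lift_π _ _

/-- The projection from the product of all `Y v` to the product over a tail. -/
noncomputable def proj (w : W) : ∏ᶜ Y ⟶ (tailProduct Y).obj w :=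
  lift Y fun v _ ↦ Pi.π Y v

@[simp]
lemma proj_π {w v : W} (h : w ≤ v) : proj Y w ≫ π Y h = Pi.π Y v :=
  lift_π _ _ h

@[simp]
lemma proj_map {w w' : W} (φ : w ⟶ w') : proj Y w ≫ (tailProduct Y).map φ = proj Y w' :=
  hom_ext fun v hv ↦ by simp

open scoped Classical in
instance [HasZeroMorphisms C] (w : W) : IsSplitEpi (proj Y w) :=
  ⟨⟨⟨Pi.lift fun v ↦ if h : w ≤ v then π Y h else 0, hom_ext fun v hv ↦ by simp [hv]⟩⟩⟩

end tailProduct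

variable [HasColimits C]

/-- The reduced product of the family `Y` with respect to the filter generated by the tails
of `W`. -/
noncomputable abbrev reducedProduct : C := colimit (tailProduct Y)

namespace reducedProduct

variable [IsDirectedOrder W] [Nonempty W]

/-- The projection from the product to the reduced product. -/
noncomputable def proj : ∏ᶜ Y ⟶ reducedProduct Y :=
  tailProduct.proj Y (Classical.arbitrary W) ≫ colimit.ι (tailProduct Y) (Classical.arbitrary W)

@[simp]
lemma tailProduct_proj_ι (w : W) :
    tailProduct.proj Y w ≫ colimit.ι (tailProduct Y) w = proj Y := by
  have h {w w' : W} (hw : w ≤ w') : tailProduct.proj Y w ≫ colimit.ι (tailProduct Y) w =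
      tailProduct.proj Y w' ≫ colimit.ι (tailProduct Y) w' := by
    rw [← colimit.w _ (homOfLE hw), reassoc_of% (tailProduct.proj_map Y (homOfLE hw))]
  obtain ⟨v, hwv, hv⟩ := exists_ge_ge w (Classical.arbitrary W)
  exact (h hwv).trans (h hv).symm

instance [HasZeroMorphisms C] : Epi (proj Y) where
  left_cancellation f g h := colimit.hom_ext fun w ↦ by
    rw [← cancel_epi (tailProduct.proj Y w), reassoc_of% (tailProduct_proj_ι Y w),
      reassoc_of% (tailProduct_proj_ι Y w), h]

variable [Abelian C]

lemma exists_proj_comp_eq {Z : C} (k : ∏ᶜ Y ⟶ Z)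
    (hk : ∀ w, kernel.ι (tailProduct.proj Y w) ≫ k = 0) : ∃ d, proj Y ≫ d = k := by
  let d (w : W) : (tailProduct Y).obj w ⟶ Z := Abelian.epiDesc (tailProduct.proj Y w) k (hk w)
  have hd (w : W) : tailProduct.proj Y w ≫ d w = k := Abelian.comp_epiDesc _ _ _
  let s : Cocone (tailProduct Y) :=
    { pt := Z
      ι :=
        { app := d
          naturality w w' φ := by
            rw [← cancel_epi (tailProduct.proj Y w), reassoc_of% (tailProduct.proj_map Y φ), hd]
            simp [hd] } }
  refine ⟨colimit.desc _ s, ?_⟩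
  rw [← tailProduct_proj_ι Y (Classical.arbitrary W), Category.assoc, colimit.ι_desc]
  exact hd _

/-- The inclusion of the sequences vanishing on a tail in those vanishing on some tail. -/
noncomputable def kernelTailι (w : W) : kernel (tailProduct.proj Y w) ⟶ kernel (proj Y) :=
  kernel.lift _ (kernel.ι _) (by rw [← tailProduct_proj_ι Y w, kernel.condition_assoc, zero_comp])

@[simp]
lemma kernelTailι_ι (w : W) :
    kernelTailι Y w ≫ kernel.ι (proj Y) = kernel.ι (tailProduct.proj Y w) :=
  kernel.lift_ι _ _ _

variable {Y} in
lemma kernelTailι_jointly_epi {Z : C} {h : kernel (proj Y) ⟶ Z}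
    (hw : ∀ w, kernelTailι Y w ≫ h = 0) : h = 0 := by
  obtain ⟨d, hd⟩ := exists_proj_comp_eq Y (pushout.inl (kernel.ι (proj Y)) h) fun w ↦ by
    rw [← kernelTailι_ι, Category.assoc, pushout.condition, reassoc_of% (hw w), zero_comp]
  rw [← cancel_mono (pushout.inr (kernel.ι (proj Y)) h), ← pushout.condition, ← hd,
    kernel.condition_assoc, zero_comp, zero_comp]

end reducedProduct

lemma exists_mono_colimit_reducedProduct [Abelian C] [AB5 C] [IsDirectedOrder W] [Nonempty W]
    (X : W ⥤ C) : ∃ f : colimit X ⟶ reducedProduct X.obj, Mono f := by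
  let τ : X ⟶ tailProduct X.obj :=
    { app w := tailProduct.lift X.obj fun v hv ↦ X.map (homOfLE hv)
      naturality w w' φ := tailProduct.hom_ext fun v hv ↦ by
        rw [Category.assoc, Category.assoc, tailProduct.map_π, tailProduct.lift_π,
          tailProduct.lift_π, ← X.map_comp]
        rfl }
  have (w : W) : Mono (τ.app w) := by
    have h : τ.app w ≫ tailProduct.π X.obj (le_refl w) = 𝟙 _ :=
      (tailProduct.lift_π _ (fun v hv ↦ X.map (homOfLE hv)) le_rfl).trans (X.map_id w)
    exact mono_of_mono_fac h
  have := NatTrans.mono_of_mono_app τ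
  exact ⟨colim.map τ, inferInstance⟩

end ReducedProduct

section Coproducts

lemma exists_eq_sum_comp_sigmaι [Preadditive C] {ι : Type*} [Fintype ι] {X : ι → C}
    [HasCoproduct X] {A : C} (z : A ⟶ ∐ X) :
    ∃ y : ∀ j, A ⟶ X j, z = ∑ j, y j ≫ Sigma.ι X j := by
  classical
  have h_one : 𝟙 (∐ X) = ∑ j, Limits.Sigma.π X j ≫ Sigma.ι X j := Sigma.hom_ext _ _ fun k ↦ by
    rw [Preadditive.comp_sum, Finset.sum_eq_single k]
    · simp
    · intro j _ hj
      rw [Sigma.ι_π_of_ne_assoc _ hj.symm, zero_comp]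
    · simp
  refine ⟨fun j ↦ z ≫ Limits.Sigma.π X j, ?_⟩
  simp only [Category.assoc, ← Preadditive.comp_sum, ← h_one, Category.comp_id]

variable [Abelian C]

lemma kernel_ι_comp_eq_zero_of_isColimit {J : Type*} [Category J] [IsConnected J]
    [HasColimitsOfShape J C] [HasExactColimitsOfShape J C] {D : J ⥤ C} {c : Cocone D}
    (hc : IsColimit c) {X Y : C} (f : c.pt ⟶ X) (g : c.pt ⟶ Y)
    (h : ∀ (j : J) {A : C} (z : A ⟶ D.obj j), z ≫ c.ι.app j ≫ f = 0 → z ≫ c.ι.app j ≫ g = 0) :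
    kernel.ι f ≫ g = 0 := by
  let τ : D ⟶ (Functor.const J).obj X :=
    { app j := c.ι.app j ≫ f
      naturality j j' φ := by simp }
  have hτ (j : J) : (kernel.ι τ).app j ≫ c.ι.app j ≫ f = 0 := congr_app (kernel.condition τ) j
  let l : colimit (kernel τ) ⟶ c.pt := IsColimit.map (colimit.isColimit _) c (kernel.ι τ)
  have hl (j : J) : colimit.ι (kernel τ) j ≫ l = (kernel.ι τ).app j ≫ c.ι.app j :=
    IsColimit.ι_map _ _ _ _
  have hlf : l ≫ f = 0 := colimit.hom_ext fun j ↦ by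
    rw [reassoc_of% (hl j), hτ j, comp_zero]
  have hlg : l ≫ g = 0 := colimit.hom_ext fun j ↦ by
    rw [reassoc_of% (hl j), h j _ (hτ j), comp_zero]
  have : Epi (kernel.lift f l hlf) :=
    (colim.exact_mapShortComplex (ShortComplex.exact_kernel τ) (colimit.isColimit _) hc
      (isColimitConstCocone J X) l f hl fun _ ↦ (Category.comp_id _).symm).epi_kernelLift
  rw [← cancel_epi (kernel.lift f l hlf), kernel.lift_ι_assoc, hlg, comp_zero]

variable [HasColimits C] [AB5 C] {I : Type v}

instance mono_sigmaMap {A B : I → C} (f : ∀ i, A i ⟶ B i) [∀ i, Mono (f i)] :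
    Mono (Limits.Sigma.map f) := by
  have := Abelian.hasFiniteBiproducts (C := C)
  have := AB4.of_AB5 C
  let φ : Discrete.functor A ⟶ Discrete.functor B := Discrete.natTrans fun i ↦ f i.as
  have (i : Discrete I) : Mono (φ.app i) := inferInstanceAs (Mono (f i.as))
  have := NatTrans.mono_of_mono_app φ
  exact inferInstanceAs (Mono (colim.map φ))

open CoproductsFromFiniteFiltered in
lemma kernel_ι_comp_eq_zero_of_forall_sum {X : I → C} {Y Z : C} (f : ∐ X ⟶ Y) (g : ∐ X ⟶ Z)
    (h : ∀ {ι : Type v} [Fintype ι] (β : ι → I) (_ : Function.Injective β) {A : C}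
      (y : ∀ j, A ⟶ X (β j)), ∑ j, y j ≫ Sigma.ι X (β j) ≫ f = 0 →
        ∑ j, y j ≫ Sigma.ι X (β j) ≫ g = 0) :
    kernel.ι f ≫ g = 0 := by
  classical
  have := IsFiltered.isConnected (Finset (Discrete I))
  let u (S : Finset (Discrete I)) : (∐ fun j : S ↦ X j.1.as) ⟶ ∐ X :=
    Sigma.desc fun j ↦ Sigma.ι X j.1.as
  refine kernel_ι_comp_eq_zero_of_isColimit (isColimitFiniteSubproductsCocone X) _ _
    fun S A (z : A ⟶ ∐ fun j : S ↦ X j.1.as) (hz : z ≫ u S ≫ f = 0) ↦ show z ≫ u S ≫ g = 0 from ?_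
  obtain ⟨y, rfl⟩ := exists_eq_sum_comp_sigmaι z
  have h_comp {T : C} (k : ∐ X ⟶ T) :
      (∑ j, y j ≫ Sigma.ι (fun j : S ↦ X j.1.as) j) ≫ u S ≫ k =
        ∑ j : S, y j ≫ Sigma.ι X j.1.as ≫ k := by
    simp [Preadditive.sum_comp, u]
  rw [h_comp] at hz ⊢
  exact h _ (fun _ _ hij ↦ Subtype.ext (Discrete.ext hij)) y hz

lemma shortExact_sigmaMap {S : I → ShortComplex C} (hS : ∀ i, (S i).ShortExact) :
    (ShortComplex.mk (Limits.Sigma.map fun i ↦ (S i).f) (Limits.Sigma.map fun i ↦ (S i).g)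
      (Sigma.hom_ext _ _ fun i ↦ by simp)).ShortExact := by
  have (i : I) := (hS i).mono_f
  have (i : I) := (hS i).epi_g
  have h_epi : Epi (Limits.Sigma.map fun i ↦ (S i).g) := inferInstance
  refine { exact := ?_, mono_f := mono_sigmaMap fun i ↦ (S i).f, epi_g := h_epi }
  refine ShortComplex.exact_of_g_is_cokernel _ (CokernelCofork.IsColimit.ofπ' _ _
    fun {A} (k : (∐ fun i ↦ (S i).X₂) ⟶ A) hk ↦ ?_)
  have hk' (i : I) : (S i).f ≫ Sigma.ι (fun i ↦ (S i).X₂) i ≫ k = 0 := by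
    simpa using Sigma.ι (fun i ↦ (S i).X₁) i ≫= hk
  exact ⟨Sigma.desc fun i ↦ (hS i).exact.desc _ (hk' i), Sigma.hom_ext _ _ fun i ↦ by
    simp [(hS i).exact.g_desc]⟩

end Coproducts

section Correction

variable [Abelian C] [HasColimits C] [AB5 C]

lemma exists_correction {I : Type v} {A N R Q : C} {q : A ⟶ R} [Epi q] (β : I → (A ⟶ N))
    (hβ : kernel.ι (Sigma.desc β) ≫ Limits.Sigma.map (fun _ ↦ q) = 0)
    (hQ : Ext1VanishesInto (image (Sigma.desc β)) Q) (φ : I → (kernel q ⟶ Q)) :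
    ∃ g : I → (A ⟶ Q), ∀ ⦃Z : C⦄ (z : Z ⟶ kernel q) (b b' : I),
      z ≫ kernel.ι q ≫ β b = z ≫ kernel.ι q ≫ β b' →
        z ≫ (φ b - kernel.ι q ≫ g b) = z ≫ (φ b' - kernel.ι q ≫ g b') := by
  let κ : (∐ fun _ : I ↦ kernel q) ⟶ ∐ fun _ : I ↦ A := Limits.Sigma.map fun _ ↦ kernel.ι q
  have : Mono κ := mono_sigmaMap fun _ ↦ kernel.ι q
  obtain ⟨l, hl⟩ : ∃ l, l ≫ κ = kernel.ι (Sigma.desc β) :=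
    have hS := (shortExact_sigmaMap fun _ : I ↦ shortExact_kernel_ι q).exact
    ⟨hS.lift _ hβ, hS.lift_f _ hβ⟩
  -- `l` includes the relations between the `β b` in the coproduct of the kernels of `q`: to make
  -- `φ` vanish on them, subtract a morphism defined on the coproduct of the `A`.
  obtain ⟨G, hG⟩ := hQ.exists_extension (shortExact_factorThruImage _) (l ≫ Limits.Sigma.desc φ)
  have hlG : l ≫ (Limits.Sigma.desc φ - κ ≫ G) = 0 := by
    rw [Preadditive.comp_sub, reassoc_of% hl, sub_eq_zero]
    exact hG.symm
  have hι (b : I) : Sigma.ι _ b ≫ (Limits.Sigma.desc φ - κ ≫ G) =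
      φ b - kernel.ι q ≫ Sigma.ι (fun _ ↦ A) b ≫ G := by
    simp [κ]
  refine ⟨fun b ↦ Sigma.ι (fun _ ↦ A) b ≫ G, fun Z z b b' h ↦ ?_⟩
  let d := z ≫ (Sigma.ι (fun _ ↦ kernel q) b - Sigma.ι (fun _ ↦ kernel q) b')
  have hd : (d ≫ κ) ≫ Sigma.desc β = 0 := by
    simp [d, κ, h]
  have hdl : d = kernel.lift _ _ hd ≫ l := by
    rw [← cancel_mono κ, Category.assoc _ l, hl, kernel.lift_ι]
  have hd_zero : d ≫ (Limits.Sigma.desc φ - κ ≫ G) = 0 := by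
    rw [hdl, Category.assoc, hlG, comp_zero]
  rw [← hι, ← hι, ← sub_eq_zero, ← Preadditive.comp_sub, ← Preadditive.sub_comp,
    ← Category.assoc]
  exact hd_zero

end Correction

section Branches

variable {W : Type v} [LinearOrder W] (Y : W → C) {L : Type v} (r : L → W)

/-- The nodes of the tree whose branches are the subsets of `L`, two branches having the same node
at the level `w` when they contain the same elements of rank less than `w`. -/
abbrev BranchNode : Type v := Σ w : W, Set {x : L // r x < w}

/-- The node at the level `w` of a branch of the tree. -/
abbrev nodeAt (b : Set L) (w : W) : Set {x : L // r x < w} := Subtype.val ⁻¹' b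

variable {r}

lemma nodeAt_eq_of_le {b b' : Set L} {v w : W} (hvw : v ≤ w) (h : nodeAt r b w = nodeAt r b' w) :
    nodeAt r b v = nodeAt r b' v :=
  Set.ext fun x ↦ Set.ext_iff.1 h ⟨x.1, x.2.trans_le hvw⟩

lemma exists_forall_ge_eq_of_nodeAt_eq [NoMaxOrder W] [Nonempty W] {ι : Type*} [Finite ι]
    (β : ι → Set L) (b : Set L) :
    ∃ w, ∀ j, ∀ v ≥ w, nodeAt r (β j) v = nodeAt r b v → β j = b := by
  have h (j : ι) : ∃ w, ∀ v ≥ w, nodeAt r (β j) v = nodeAt r b v → β j = b := by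
    by_cases hj : β j = b
    · exact ⟨Classical.arbitrary W, fun _ _ _ ↦ hj⟩
    obtain ⟨x, hx⟩ := not_forall.1 (mt Set.ext hj)
    obtain ⟨w, hw⟩ := exists_gt (r x)
    exact ⟨w, fun v hv h ↦ (hx (Set.ext_iff.1 h ⟨x, hw.trans_le hv⟩)).elim⟩
  choose w hw using h
  obtain ⟨M, hM⟩ := Finite.exists_le w
  exact ⟨M, fun j v hv ↦ hw j v ((hM j).trans hv)⟩

variable [HasLimits C] (r)

open scoped Classical in
/-- The diagonal copy of the product of `Y` along a branch of the tree, in the product over the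
nodes. -/
noncomputable def branch [HasZeroMorphisms C] (b : Set L) :
    ∏ᶜ Y ⟶ ∏ᶜ fun n : BranchNode r ↦ Y n.1 :=
  Pi.lift fun n ↦ if nodeAt r b n.1 = n.2 then Pi.π Y n.1 else 0

open scoped Classical in
@[simp]
lemma branch_π [HasZeroMorphisms C] (b : Set L) (n : BranchNode r) :
    branch Y r b ≫ Pi.π _ n = if nodeAt r b n.1 = n.2 then Pi.π Y n.1 else 0 :=
  Pi.lift_π _ _

variable [Abelian C] {r}

lemma kernel_ι_proj_branch {w : W} {b b' : Set L} (h : nodeAt r b w = nodeAt r b' w) :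
    kernel.ι (tailProduct.proj Y w) ≫ branch Y r b =
      kernel.ι (tailProduct.proj Y w) ≫ branch Y r b' := by
  refine Pi.hom_ext _ _ fun n ↦ ?_
  rw [Category.assoc, Category.assoc, branch_π, branch_π]
  obtain hn | hn := le_total w n.1
  · have h_zero : kernel.ι (tailProduct.proj Y w) ≫ Pi.π Y n.1 = 0 := by
      rw [← tailProduct.proj_π Y hn, kernel.condition_assoc, zero_comp]
    split_ifs <;> simp [h_zero]
  · rw [nodeAt_eq_of_le hn h]

variable [HasColimits C] [NoMaxOrder W] [Nonempty W]

variable {Y} in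
lemma comp_reducedProduct_proj_eq_zero {ι : Type*} [Fintype ι] {β : ι → Set L}
    (hβ : Function.Injective β) {A : C} (z : ι → (A ⟶ ∏ᶜ Y))
    (hz : ∑ j, z j ≫ branch Y r (β j) = 0) (j : ι) : z j ≫ reducedProduct.proj Y = 0 := by
  obtain ⟨w, hw⟩ := exists_forall_ge_eq_of_nodeAt_eq (r := r) β (β j)
  suffices z j ≫ tailProduct.proj Y w = 0 by
    rw [← reducedProduct.tailProduct_proj_ι Y w, reassoc_of% this, zero_comp]
  refine tailProduct.hom_ext fun v hv ↦ ?_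
  have hzv := hz =≫ Pi.π _ ⟨v, nodeAt r (β j) v⟩
  rw [Preadditive.sum_comp, Finset.sum_eq_single j] at hzv
  · simpa using hzv
  · intro k _ hk
    rw [Category.assoc, branch_π, if_neg fun h ↦ hk (hβ (hw k v hv h)), comp_zero]
  · simp

variable (r) [AB5 C]

lemma kernel_ι_desc_branch_comp :
    kernel.ι (Sigma.desc (branch Y r)) ≫
      Limits.Sigma.map (fun _ ↦ reducedProduct.proj Y) = 0 := by
  refine kernel_ι_comp_eq_zero_of_forall_sum _ _ fun β hβ A y hy ↦ ?_
  have hz := comp_reducedProduct_proj_eq_zero (r := r) hβ y (by simpa using hy)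
  simp [reassoc_of% hz]

variable {r} {Q : C}

lemma exists_branch_correction (hQ : Ext1VanishesInto (image (Sigma.desc (branch Y r))) Q)
    (φ : Set L → (kernel (reducedProduct.proj Y) ⟶ Q)) :
    ∃ g : Set L → (∏ᶜ Y ⟶ Q), ∀ ⦃w : W⦄ ⦃b b' : Set L⦄, nodeAt r b w = nodeAt r b' w →
      reducedProduct.kernelTailι Y w ≫ (φ b - kernel.ι (reducedProduct.proj Y) ≫ g b) =
        reducedProduct.kernelTailι Y w ≫ (φ b' - kernel.ι (reducedProduct.proj Y) ≫ g b') := by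
  obtain ⟨g, hg⟩ := exists_correction (branch Y r) (kernel_ι_desc_branch_comp Y r) hQ φ
  refine ⟨g, fun w b b' h ↦ hg _ b b' ?_⟩
  rw [reassoc_of% (reducedProduct.kernelTailι_ι Y w), reassoc_of%
    (reducedProduct.kernelTailι_ι Y w), kernel_ι_proj_branch Y h]

variable {Y}

open scoped Classical Cardinal in
theorem exists_kernel_ι_reducedProduct_proj_comp_eq [WellFoundedLT W]
    (hQ : ∀ (N : Type v) (α : N → W) (V : C) (m : V ⟶ ∏ᶜ fun n ↦ Y (α n)) [Mono m],
      Ext1VanishesInto V Q) (f : kernel (reducedProduct.proj Y) ⟶ Q) :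
    ∃ g, kernel.ι (reducedProduct.proj Y) ≫ g = f := by
  obtain ⟨L, r, hr⟩ := exists_rank_forall_not_injective W
    (Cardinal.sum fun w ↦ #(kernel (tailProduct.proj Y w) ⟶ Q))
  let φ (T : Set (Set L)) (b : Set L) := if b ∈ T then f else 0
  choose g hg using fun T ↦ exists_branch_correction Y
    (hQ _ _ _ (image.ι (Sigma.desc (branch Y r)))) (φ T)
  let ψ (T : Set (Set L)) (b : Set L) := φ T b - kernel.ι (reducedProduct.proj Y) ≫ g T b
  obtain ⟨T, T', hψ, hT⟩ := Function.not_injective_iff.1 <|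
    hr _ (fun w ↦ Cardinal.le_sum (fun w ↦ #(kernel (tailProduct.proj Y w) ⟶ Q)) w)
      fun T w s ↦ reducedProduct.kernelTailι Y w ≫ ψ T (Subtype.val '' s)
  have hψ_eq (b : Set L) : ψ T b = ψ T' b := by
    rw [← sub_eq_zero]
    refine reducedProduct.kernelTailι_jointly_epi fun w ↦ ?_
    have hb : nodeAt r b w = nodeAt r (Subtype.val '' nodeAt r b w) w :=
      (Set.preimage_image_eq _ Subtype.val_injective).symm
    rw [Preadditive.comp_sub, sub_eq_zero]
    exact (hg T hb).trans ((congr_fun₂ hψ w (nodeAt r b w)).trans (hg T' hb).symm)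
  clear hψ
  wlog hTT' : ¬ T ⊆ T' generalizing T T'
  · exact this T' T hT.symm (fun b ↦ (hψ_eq b).symm) fun h ↦
      hT (Set.Subset.antisymm (not_not.1 hTT') h)
  obtain ⟨b, hb, hb'⟩ := Set.not_subset.1 hTT'
  refine ⟨g T b - g T' b, ?_⟩
  have h := hψ_eq b
  simp only [ψ, φ, if_pos hb, if_neg hb', zero_sub] at h
  rw [Preadditive.comp_sub, sub_eq_add_neg, ← h, add_sub_cancel]

end Branches

section DirectLimits

variable [Abelian C] [HasColimits C] [HasLimits C] [AB5 C] {P : ObjectProperty C}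
  [∀ N : Type v, P.IsClosedUnderLimitsOfShape (Discrete N)] [P.IsClosedUnderSubobjects] {Q : C}
  {W : Type v} [LinearOrder W] [WellFoundedLT W] [Nonempty W]

lemma prop_reducedProduct [NoMaxOrder W] (hExt : ∀ X, P X → Ext1VanishesInto X Q)
    (hquot : ∀ ⦃X Y : C⦄ (p : X ⟶ Y) [Epi p], P X → Ext1VanishesInto Y Q → P Y)
    {Y : W → C} (hY : ∀ w, P (Y w)) : P (reducedProduct Y) := by
  have h_prod := P.prop_pi Y hY
  refine hquot (reducedProduct.proj Y) h_prod ((hExt _ h_prod).of_exists_extension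
    (shortExact_kernel_ι (reducedProduct.proj Y))
    (exists_kernel_ι_reducedProduct_proj_comp_eq fun N α V m _ ↦ hExt V ?_))
  exact P.prop_of_mono m (P.prop_pi _ fun n ↦ hY (α n))

lemma prop_colimit_of_wellOrder (hExt : ∀ X, P X → Ext1VanishesInto X Q)
    (hquot : ∀ ⦃X Y : C⦄ (p : X ⟶ Y) [Epi p], P X → Ext1VanishesInto Y Q → P Y)
    (D : W ⥤ C) (hD : ∀ w, P (D.obj w)) : P (colimit D) := by
  by_cases hW : ∃ w : W, IsMax w
  · obtain ⟨w, hw⟩ := hW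
    have hT : IsTerminal w := .ofUniqueHom (fun v ↦ homOfLE (hw.isTop v))
      fun _ _ ↦ Subsingleton.elim _ _
    have := isIso_ι_of_isTerminal hT D
    exact P.prop_of_iso (asIso (colimit.ι D w)) (hD w)
  · have : NoMaxOrder W := ⟨fun w ↦ not_isMax_iff.1 fun hw ↦ hW ⟨w, hw⟩⟩
    obtain ⟨f, hf⟩ := exists_mono_colimit_reducedProduct D
    exact P.prop_of_mono f (prop_reducedProduct hExt hquot hD)

end DirectLimits

theorem quasiCotilting_finiteType_general [Abelian C] [HasColimits C] [HasLimits C] [AB5 C]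
    (P : ObjectProperty C) [∀ N : Type v, P.IsClosedUnderLimitsOfShape (Discrete N)]
    [P.IsClosedUnderSubobjects] (Q : C) (hExt : ∀ X, P X → Ext1VanishesInto X Q)
    (hquot : ∀ ⦃X Y : C⦄ (p : X ⟶ Y) [Epi p], P X → Ext1VanishesInto Y Q → P Y) :
    ClosedUnderDirectLimits P := by
  intro J _ _ D hD c hc
  have := isClosedUnderColimitsOfShape_of_wellOrder P (fun W _ _ _ ↦ .mk' (by
    rintro _ ⟨X, hX⟩
    exact prop_colimit_of_wellOrder hExt hquot X hX)) J
  exact P.prop_of_isColimit hc hD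

section Cogen

variable [HasLimits C] (Q : C)

instance : ObjectProperty.IsClosedUnderSubobjects (CogenClass Q) where
  prop_of_mono m _ := fun ⟨ι, f, _⟩ ↦ ⟨ι, m ≫ f, mono_comp m f⟩

variable {Q} in
lemma CogenClass.pi {N : Type v} {Y : N → C} (h : ∀ n, CogenClass Q (Y n)) :
    CogenClass Q (∏ᶜ Y) := by
  choose ι f hf using h
  refine ⟨Σ n, ι n, Pi.lift fun p ↦ Pi.π Y p.1 ≫ f p.1 ≫ Pi.π _ p.2, ⟨fun {Z} a b hab ↦ ?_⟩⟩
  refine Pi.hom_ext _ _ fun n ↦ (cancel_mono (f n)).1 (Pi.hom_ext _ _ fun k ↦ ?_)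
  simpa using hab =≫ Pi.π _ ⟨n, k⟩

instance (N : Type v) :
    ObjectProperty.IsClosedUnderLimitsOfShape (CogenClass Q) (Discrete N) :=
  .mk' (by
    rintro _ ⟨D, hD⟩
    exact ObjectProperty.prop_of_iso (CogenClass Q) (Pi.isoLimit D)
      (CogenClass.pi fun n ↦ hD ⟨n⟩))

end Cogen

theorem quasiCotilting_finiteType
    [Abelian C] [HasColimits C] [HasLimits C] [AB5 C]
    (hsep : ∃ G : C, IsSeparator G)
    (Q : C)
    -- `Q` is quasi-cotilting : `Cogen(Q) = ⊥₁Q ∩ Cogen-bar(Q)`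
    (hQ : ∀ X : C, CogenClass Q X ↔ (Ext1VanishesInto X Q ∧ CogenBarClass Q X)) :
    ClosedUnderDirectLimits (CogenClass Q) :=
  quasiCotilting_finiteType_general (CogenClass Q) Q (fun X h ↦ ((hQ X).1 h).1)
    fun _ _ p _ hX hY ↦ (hQ _).2 ⟨hY, _, hX, p, inferInstance⟩
end
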